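/- Let C be an [n,k] rank metric code with n ≥ k ≥ 1, G a generator matrix of C, U the F-span of the columns of G in the space of column vectors E^{[k]}, and let r ∈ {1,…,k−1}. Then the following are equivalent: (1) all E-subspaces D of C with dim_E(D) = r have the same rank support weight; (2) U = E^{[k]}; (3) wt(C) = dim_F(C) = mk. -/

import Mathlib

open Submodule Pointwise

/-- The coordinatewise inclusion of `F^n` into `E^n`. -/
noncomputable def fIncl (F E : Type*) [Field F] [Field E] [Algebra F E] (n : ℕ) :
    (Fin n → F) →ₗ[F] (Fin n → E) :=
  LinearMap.compLeft (Algebra.linearMap F E) (Fin n)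

/-- The rank support `χ(A)` of `A ⊆ E^n`: the smallest `F`-subspace `U` of `F^n`
such that `A` is contained in the `E`-span of (the image in `E^n` of) `U`. -/
noncomputable def rankSupport (F E : Type*) [Field F] [Field E] [Algebra F E] (n : ℕ)
    (A : Set (Fin n → E)) : Submodule F (Fin n → F) :=
  sInf {U : Submodule F (Fin n → F) |
    A ⊆ (Submodule.span E (fIncl F E n '' (U : Set (Fin n → F))) : Set (Fin n → E))}

/-- The rank support weight `wt(A) = dim_F χ(A)`. -/
noncomputable def wt (F E : Type*) [Field F] [Field E] [Algebra F E] (n : ℕ)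
    (A : Set (Fin n → E)) : ℕ :=
  Module.finrank F (rankSupport F E n A)

/-!
View the columns of `G` as vectors of `V = E^k`, and the codewords as functionals on `V` evaluated
at them. The subcode of the functionals vanishing on an `E`-subspace `W` then has weight
`dim_F U - dim_F (U ∩ W)`, so (1) says that `dim_F (U ∩ W)` is constant over the `W` of
dimension `k - r`. Restricting to the subspaces of dimension `k - r + 1` that meet `U`
nontrivially reduces this to the case of hyperplanes.

For hyperplanes, some nonzero functional kills a nonzero vector of `U`. If `dim_F U < m`, another
functional is injective on `U`, which contradicts constancy. Hence `dim_F U ≥ m`, so some functional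
maps `U` onto `E`. By constancy every nonzero functional does, and composing with a fixed
nonzero `F`-functional on `E` embeds the dual of `V` into the dual of `U`, so that `U = V`.
-/

section GenericPerturbation

variable {K M N : Type*} [Field K] [AddCommGroup M] [Module K M] [FiniteDimensional K M]
  [AddCommGroup N] [Module K N]

theorem finite_setOf_not_injective_add_smul {f : M →ₗ[K] N} (hf : Function.Injective f)
    (g : M →ₗ[K] N) : {t : K | ¬ Function.Injective (f + t • g)}.Finite := by
  obtain ⟨p, hp⟩ := f.exists_leftInverse_of_injective (LinearMap.ker_eq_bot.2 hf)
  refine ((Module.End.finite_hasEigenvalue (p ∘ₗ g)).image fun μ => -μ⁻¹).subset fun t ht => ?_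
  obtain ⟨x, hx, hx0⟩ : ∃ x, f x + t • g x = 0 ∧ x ≠ 0 := by
    simpa [injective_iff_map_eq_zero] using ht
  have eigen : x + t • p (g x) = 0 := by
    simpa [← LinearMap.comp_apply p f, hp] using congrArg p hx
  have ht0 : t ≠ 0 := by
    rintro rfl
    exact hx0 (by simpa using eigen)
  refine ⟨-t⁻¹, Module.End.hasEigenvalue_of_hasEigenvector ⟨?_, hx0⟩, by simp⟩
  rw [Module.End.mem_eigenspace_iff, LinearMap.comp_apply, neg_smul, ← smul_neg,
    eq_inv_smul_iff₀ ht0]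
  exact eq_neg_of_add_eq_zero_right eigen

theorem exists_ne_zero_injective_add_smul_of_notMem_range [Infinite K] {f : M →ₗ[K] N}
    (hf : Function.Injective f) (g : M →ₗ[K] N) {y : N} (hy : y ∉ LinearMap.range f) :
    ∃ t : K, t ≠ 0 ∧ Function.Injective ((f + t • g).coprod (LinearMap.toSpanSingleton K N y)) := by
  have hfy : Function.Injective (f.coprod (LinearMap.toSpanSingleton K N y)) := by
    rw [injective_iff_map_eq_zero]
    rintro ⟨x, s⟩ h
    replace h : f x + s • y = 0 := by simpa using h
    have hs : s = 0 := by
      by_contra hs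
      refine hy ⟨-s⁻¹ • x, ?_⟩
      rw [map_smul, eq_neg_of_add_eq_zero_left h, smul_neg, neg_smul, neg_neg, inv_smul_smul₀ hs]
    subst hs
    simpa [map_eq_zero_iff f hf] using h
  obtain ⟨t, ht⟩ := ((finite_setOf_not_injective_add_smul hfy
    (g ∘ₗ LinearMap.fst K M K)).union (Set.finite_singleton 0)).exists_notMem
  simp only [Set.mem_union, Set.mem_ofPred_eq, Set.mem_singleton_iff, not_or, not_not] at ht
  refine ⟨t, ht.2, ?_⟩
  convert ht.1 using 2
  ext <;> simp

end GenericPerturbation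

theorem exists_submodule_finrank_eq_of_le {K V : Type*} [Field K] [AddCommGroup V] [Module K V]
    [FiniteDimensional K V] {P Q : Submodule K V} (hPQ : P ≤ Q) {d : ℕ}
    (hPd : Module.finrank K P ≤ d) (hdQ : d ≤ Module.finrank K Q) :
    ∃ R : Submodule K V, P ≤ R ∧ R ≤ Q ∧ Module.finrank K R = d := by
  induction d, hPd using Nat.le_induction with
  | base => exact ⟨P, le_rfl, hPQ, rfl⟩
  | succ d _ ih =>
    obtain ⟨R, hPR, hRQ, rfl⟩ := ih (by omega)
    obtain ⟨x, hxQ, hxR⟩ := SetLike.exists_of_lt (lt_of_le_of_finrank_lt_finrank hRQ hdQ)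
    exact ⟨R ⊔ K ∙ x, hPR.trans le_sup_left,
      sup_le hRQ ((span_singleton_le_iff_mem _ _).2 hxQ), finrank_sup_span_singleton hxR⟩

theorem finrank_map_add_finrank_inf_ker {K V W : Type*} [Field K] [AddCommGroup V] [Module K V]
    [AddCommGroup W] [Module K W] (U : Submodule K V) [FiniteDimensional K U] (f : V →ₗ[K] W) :
    Module.finrank K (U.map f) + Module.finrank K (U ⊓ LinearMap.ker f : Submodule K V) =
      Module.finrank K U := by
  rw [← (f.domRestrict U).finrank_range_add_finrank_ker, LinearMap.range_domRestrict,
    LinearMap.ker_domRestrict, ← finrank_map_subtype_eq U, map_comap_subtype]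

theorem finrank_comap_add_finrank_range {K M N : Type*} [Field K] [AddCommGroup M] [Module K M]
    [FiniteDimensional K M] [AddCommGroup N] [Module K N] (g : M →ₗ[K] N) (W : Submodule K N) :
    Module.finrank K (W.comap g) + Module.finrank K (LinearMap.range g) =
      Module.finrank K (LinearMap.range g ⊓ W : Submodule K N) + Module.finrank K M := by
  have h := finrank_map_add_finrank_inf_ker (W.comap g) g
  rw [map_comap_eq, inf_eq_right.2 (LinearMap.ker_le_comap g)] at h
  have hg := g.finrank_range_add_finrank_ker
  omega

section DualRestriction

variable {F E V : Type*} [Field F] [Field E] [Algebra F E] [AddCommGroup V] [Module F V]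
  [Module E V] [IsScalarTower F E V]

theorem exists_dual_disjoint_ker_sup_span_of_infinite [Infinite F] {P : Submodule F V}
    [FiniteDimensional F P] {f : Module.Dual E V}
    (hf : Disjoint P (LinearMap.ker (f.restrictScalars F))) {u : V} (hu0 : u ≠ 0) (hu : f u = 0)
    (hP : Module.finrank F P < Module.finrank F E) :
    ∃ f' : Module.Dual E V, Disjoint (P ⊔ F ∙ u) (LinearMap.ker (f'.restrictScalars F)) := by
  obtain ⟨g, hgu⟩ := Module.Projective.exists_dual_eq_one E hu0
  let restrict (h : Module.Dual E V) : P →ₗ[F] E := (h.restrictScalars F).domRestrict P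
  have hf_inj : Function.Injective (restrict f) :=
    (injective_iff_map_eq_zero _).2 fun x hx => Subtype.ext (disjoint_def.1 hf x x.2 hx)
  obtain ⟨e, he⟩ : ∃ e, e ∉ LinearMap.range (restrict f) := by
    by_contra! hall
    have hle := LinearMap.finrank_range_le (restrict f)
    rw [eq_top_iff'.2 hall, finrank_top] at hle
    omega
  -- Multiplying `g` by `e` puts the value at `u`, a multiple of `e`, outside the range of `f`.
  obtain ⟨t, ht0, ht⟩ := exists_ne_zero_injective_add_smul_of_notMem_range hf_inj
    (restrict (e • g)) he
  refine ⟨f + (t • e) • g, disjoint_def.2 fun w hw hker => ?_⟩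
  obtain ⟨x, hx, s, rfl⟩ : ∃ x ∈ P, ∃ s : F, x + s • u = w := by
    simpa [mem_sup, mem_span_singleton] using hw
  have hzero : ((⟨x, hx⟩, s * t) : P × F) = 0 := by
    refine (injective_iff_map_eq_zero _).1 ht _ ?_
    simpa [restrict, hu, hgu, mul_add, add_assoc, mul_smul, smul_comm s t e] using hker
  simp only [Prod.mk_eq_zero, mk_eq_zero, mul_eq_zero, ht0, or_false] at hzero
  simp [hzero]

variable [FiniteDimensional F E]

theorem exists_dual_disjoint_ker_sup_span_of_finite [Finite F] {P : Submodule F V}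
    [FiniteDimensional F P] {f : Module.Dual E V}
    (hf : Disjoint P (LinearMap.ker (f.restrictScalars F))) {u : V} (hu0 : u ≠ 0) (hu : f u = 0)
    (hP : Module.finrank F P < Module.finrank F E) :
    ∃ f' : Module.Dual E V, Disjoint (P ⊔ F ∙ u) (LinearMap.ker (f'.restrictScalars F)) := by
  obtain ⟨g, hgu⟩ := Module.Projective.exists_dual_eq_one E hu0
  let Q : Submodule F V := P ⊔ F ∙ u
  have huQ : u ∈ Q := mem_sup_right (mem_span_singleton_self u)
  have no_common_zero : ∀ w ∈ Q, f w = 0 → g w = 0 → w = 0 := by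
    intro w hw hfw hgw
    obtain ⟨x, hx, s, rfl⟩ : ∃ x ∈ P, ∃ s : F, x + s • u = w := by
      simpa [Q, mem_sup, mem_span_singleton] using hw
    have hx0 : x = 0 := disjoint_def.1 hf x hx (by simpa [hu] using hfw)
    subst hx0
    simpa [hgu, hu0] using hgw
  have card_le : Nat.card Q ≤ Nat.card E := by
    rw [Module.natCard_eq_pow_finrank (K := F), Module.natCard_eq_pow_finrank (K := F) (V := E)]
    exact Nat.pow_le_pow_right Nat.card_pos ((finrank_add_le_finrank_add_finrank _ _).trans
      (by rw [finrank_span_singleton hu0]; exact hP))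
  have : Finite Q := Module.finite_of_finite F
  -- `u` and `0` collide and `Q` is no larger than `E`, so the map misses some `e`; then `f + e g`
  -- vanishes on `Q` only at the common zeros of `f` and `g`.
  have not_surjective : ¬ Function.Surjective fun w : Q => -f w / g w := fun hsurj =>
    hu0 (congrArg Subtype.val
      ((hsurj.bijective_of_nat_card_le card_le).injective (a₁ := ⟨u, huQ⟩) (a₂ := 0)
        (by simp [hu])))
  obtain ⟨e, he⟩ := not_forall.1 not_surjective
  refine ⟨f + e • g, disjoint_def.2 fun w hw hker => ?_⟩
  have hsum : f w + e * g w = 0 := hker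
  by_cases hgw : g w = 0
  · exact no_common_zero w hw (by simpa [hgw] using hsum) hgw
  · exact (he ⟨⟨w, hw⟩, (div_eq_iff hgw).2 (eq_neg_of_add_eq_zero_right hsum).symm⟩).elim

variable [FiniteDimensional E V]

theorem exists_dual_disjoint_ker {U : Submodule F V}
    (hU : Module.finrank F U ≤ Module.finrank F E) :
    ∃ f : Module.Dual E V, Disjoint U (LinearMap.ker (f.restrictScalars F)) := by
  have : FiniteDimensional F V := FiniteDimensional.trans F E V
  obtain ⟨P, ⟨hPU, f, hf⟩, hmax⟩ := exists_maximal_of_wellFoundedGT (fun P : Submodule F V =>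
    P ≤ U ∧ ∃ f : Module.Dual E V, Disjoint P (LinearMap.ker (f.restrictScalars F)))
    ⟨⊥, bot_le, 0, disjoint_bot_left⟩
  refine ⟨f, disjoint_def.2 fun u huU hu => ?_⟩
  by_contra hu0
  have huP : u ∉ P := fun huP => hu0 (disjoint_def.1 hf u huP hu)
  have hPlt : Module.finrank F P < Module.finrank F E :=
    (finrank_lt_finrank_of_lt (SetLike.lt_iff_le_and_exists.2 ⟨hPU, u, huU, huP⟩)).trans_le hU
  have hext : ∃ f' : Module.Dual E V,
      Disjoint (P ⊔ F ∙ u) (LinearMap.ker (f'.restrictScalars F)) := by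
    rcases finite_or_infinite F
    · exact exists_dual_disjoint_ker_sup_span_of_finite hf hu0 hu hPlt
    · exact exists_dual_disjoint_ker_sup_span_of_infinite hf hu0 hu hPlt
  exact huP (hmax ⟨sup_le hPU ((span_singleton_le_iff_mem _ _).2 huU), hext⟩ le_sup_left
    (mem_sup_right (mem_span_singleton_self u)))

theorem exists_dual_map_eq_top {U : Submodule F V}
    (hU : Module.finrank F E ≤ Module.finrank F U) :
    ∃ f : Module.Dual E V, U.map (f.restrictScalars F) = ⊤ := by
  have : FiniteDimensional F V := FiniteDimensional.trans F E V
  obtain ⟨P, -, hPU, hP⟩ := exists_submodule_finrank_eq_of_le (bot_le : ⊥ ≤ U)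
    (by simp) hU
  obtain ⟨f, hf⟩ := exists_dual_disjoint_ker (E := E) hP.le
  have hmap : Module.finrank F (P.map (f.restrictScalars F)) = Module.finrank F E := by
    have h := finrank_map_add_finrank_inf_ker P (f.restrictScalars F)
    rwa [hf.eq_bot, finrank_bot, add_zero, hP] at h
  exact ⟨f, top_unique (eq_top_of_finrank_eq hmap ▸ map_mono hPU)⟩

theorem eq_top_of_forall_map_dual_eq_top {U : Submodule F V}
    (hU : ∀ f : Module.Dual E V, f ≠ 0 → U.map (f.restrictScalars F) = ⊤) : U = ⊤ := by
  have : FiniteDimensional F V := FiniteDimensional.trans F E V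
  obtain ⟨l, hl⟩ : ∃ l : Module.Dual F E, l ≠ 0 := exists_ne 0
  let T : Module.Dual E V →ₗ[F] Module.Dual F U := LinearMap.lcomp F F U.subtype ∘ₗ
    LinearMap.compRight F l ∘ₗ LinearMap.restrictScalarsₗ F E V E F
  have hT : Function.Injective T := by
    refine (injective_iff_map_eq_zero T).2 fun f hf => by_contra fun hf0 => hl ?_
    ext e
    obtain ⟨u, hu, rfl⟩ : e ∈ U.map (f.restrictScalars F) := hU f hf0 ▸ mem_top
    exact LinearMap.congr_fun hf ⟨u, hu⟩
  apply eq_top_of_finrank_eq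
  refine (finrank_le U).antisymm ?_
  calc Module.finrank F V = Module.finrank F (Module.Dual E V) := by
        rw [← Module.finrank_mul_finrank F E V, ← Module.finrank_mul_finrank F E (Module.Dual E V),
          Subspace.dual_finrank_eq]
    _ ≤ Module.finrank F (Module.Dual F U) := LinearMap.finrank_le_finrank_of_injective hT
    _ = Module.finrank F U := Subspace.dual_finrank_eq

end DualRestriction

section ConstantIntersection

variable {F E V : Type*} [Field F] [Field E] [Algebra F E] [AddCommGroup V] [Module F V]
  [Module E V] [IsScalarTower F E V]

theorem finrank_comap_subtype_inf (U : Submodule F V) {W : Submodule E V} (H : Submodule E W) :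
    Module.finrank F
        (U.comap (W.subtype.restrictScalars F) ⊓ H.restrictScalars F : Submodule F W) =
      Module.finrank F (U ⊓ (H.map W.subtype).restrictScalars F : Submodule F V) := by
  have hinj : Function.Injective (W.subtype.restrictScalars F) := W.subtype_injective
  rw [restrictScalars_map, inf_comm, inf_comm U, map_inf_eq_map_inf_comap]
  exact (equivMapOfInjective _ hinj _).finrank_eq

variable [FiniteDimensional F E] [FiniteDimensional E V]

theorem finrank_le_finrank_of_finrank_inf_ker_dual_eq {U : Submodule F V} (hU0 : U ≠ ⊥)
    (hV : 2 ≤ Module.finrank E V)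
    (hU : ∀ f g : Module.Dual E V, f ≠ 0 → g ≠ 0 →
      Module.finrank F (U ⊓ LinearMap.ker (f.restrictScalars F) : Submodule F V) =
        Module.finrank F (U ⊓ LinearMap.ker (g.restrictScalars F) : Submodule F V)) :
    Module.finrank F E ≤ Module.finrank F U := by
  have : FiniteDimensional F V := FiniteDimensional.trans F E V
  obtain ⟨u, huU, hu0⟩ := exists_mem_ne_zero_of_ne_bot hU0
  obtain ⟨f, hf0, hfu⟩ := exists_le_ker_of_lt_top (E ∙ u) <| lt_top_of_finrank_lt_finrank <| by
    rw [finrank_span_singleton hu0]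
    omega
  by_contra! hlt
  obtain ⟨g, hg⟩ := exists_dual_disjoint_ker (E := E) hlt.le
  have hg0 : g ≠ 0 := by
    rintro rfl
    exact hu0 (disjoint_def.1 hg u huU rfl)
  have hker := hU f g hf0 hg0
  rw [hg.eq_bot, finrank_bot, finrank_eq_zero] at hker
  exact hu0 ((mem_bot F).1 (hker ▸ ⟨huU, hfu (mem_span_singleton_self u)⟩))

theorem eq_top_of_finrank_inf_ker_dual_eq {U : Submodule F V} (hU0 : U ≠ ⊥)
    (hV : 2 ≤ Module.finrank E V)
    (hU : ∀ f g : Module.Dual E V, f ≠ 0 → g ≠ 0 →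
      Module.finrank F (U ⊓ LinearMap.ker (f.restrictScalars F) : Submodule F V) =
        Module.finrank F (U ⊓ LinearMap.ker (g.restrictScalars F) : Submodule F V)) : U = ⊤ := by
  have : FiniteDimensional F V := FiniteDimensional.trans F E V
  obtain ⟨g, hg⟩ := exists_dual_map_eq_top (E := E)
    (finrank_le_finrank_of_finrank_inf_ker_dual_eq hU0 hV hU)
  have hg0 : g ≠ 0 := by
    rintro rfl
    obtain ⟨x, -, hx⟩ : (1 : E) ∈ U.map ((0 : Module.Dual E V).restrictScalars F) :=
      hg ▸ mem_top
    exact zero_ne_one hx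
  refine eq_top_of_forall_map_dual_eq_top (E := E) fun f hf0 => eq_top_of_finrank_eq ?_
  have hrank_f := finrank_map_add_finrank_inf_ker U (f.restrictScalars F)
  have hrank_g := finrank_map_add_finrank_inf_ker U (g.restrictScalars F)
  rw [hg, finrank_top] at hrank_g
  have hker := hU f g hf0 hg0
  omega

theorem restrictScalars_le_of_finrank_inf_eq {U : Submodule F V} {s : ℕ} (hs : 1 ≤ s)
    (hU : ∀ H H' : Submodule E V, Module.finrank E H = s → Module.finrank E H' = s →
      Module.finrank F (U ⊓ H.restrictScalars F : Submodule F V) =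
        Module.finrank F (U ⊓ H'.restrictScalars F : Submodule F V))
    {W : Submodule E V} (hW : Module.finrank E W = s + 1) {v : V} (hv0 : v ≠ 0) (hvU : v ∈ U)
    (hvW : v ∈ W) : W.restrictScalars F ≤ U := by
  have htop : U.comap (W.subtype.restrictScalars F) = ⊤ := by
    refine eq_top_of_finrank_inf_ker_dual_eq (E := E) ?_ (by omega) fun f g hf0 hg0 => ?_
    · exact (Submodule.ne_bot_iff _).2
        ⟨⟨v, hvW⟩, hvU, fun h => hv0 (congrArg Subtype.val h)⟩
    · have finrank_ker (h : Module.Dual E W) (hh0 : h ≠ 0) :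
          Module.finrank E ((LinearMap.ker h).map W.subtype) = s := by
        have := Module.Dual.finrank_ker_add_one_of_ne_zero hh0
        rw [finrank_map_subtype_eq]
        omega
      rw [LinearMap.ker_restrictScalars, LinearMap.ker_restrictScalars, finrank_comap_subtype_inf,
        finrank_comap_subtype_inf]
      exact hU _ _ (finrank_ker f hf0) (finrank_ker g hg0)
  exact fun w hw => (htop ▸ mem_top : (⟨w, hw⟩ : W) ∈ U.comap (W.subtype.restrictScalars F))

theorem eq_top_of_finrank_inf_eq {U : Submodule F V} (hspan : span E (U : Set V) = ⊤) {s : ℕ}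
    (hs : 1 ≤ s) (hsV : s < Module.finrank E V)
    (hU : ∀ W W' : Submodule E V, Module.finrank E W = s → Module.finrank E W' = s →
      Module.finrank F (U ⊓ W.restrictScalars F : Submodule F V) =
        Module.finrank F (U ⊓ W'.restrictScalars F : Submodule F V)) : U = ⊤ := by
  have smul_mem_U (e : E) {v : V} (hv : v ∈ U) : e • v ∈ U := by
    rcases eq_or_ne v 0 with rfl | hv0
    · simp
    obtain ⟨W, hvW, -, hW⟩ := exists_submodule_finrank_eq_of_le (le_top : E ∙ v ≤ ⊤)
      (d := s + 1) (by rw [finrank_span_singleton hv0]; omega) (by rwa [finrank_top])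
    rw [span_singleton_le_iff_mem] at hvW
    exact restrictScalars_le_of_finrank_inf_eq hs hU hW hv0 hv hvW (W.smul_mem e hvW)
  let U' : Submodule E V := { U with smul_mem' := fun e _ hv => smul_mem_U e hv }
  have hU' : U' = ⊤ := top_unique (hspan ▸ span_le.2 fun _ hx => hx)
  exact eq_top_iff'.2 fun x => (hU' ▸ mem_top : x ∈ U')

theorem forall_finrank_inf_eq_iff_eq_top {U : Submodule F V} (hspan : span E (U : Set V) = ⊤)
    {s : ℕ} (hs : 1 ≤ s) (hsV : s < Module.finrank E V) :
    (∀ W W' : Submodule E V, Module.finrank E W = s → Module.finrank E W' = s →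
      Module.finrank F (U ⊓ W.restrictScalars F : Submodule F V) =
        Module.finrank F (U ⊓ W'.restrictScalars F : Submodule F V)) ↔ U = ⊤ := by
  refine ⟨eq_top_of_finrank_inf_eq hspan hs hsV, ?_⟩
  rintro rfl W W' hW hW'
  have finrank_eq (W : Submodule E V) :
      Module.finrank F (W.restrictScalars F) = Module.finrank F E * Module.finrank E W :=
    (Module.finrank_mul_finrank F E W).symm
  rw [top_inf_eq, top_inf_eq, finrank_eq, finrank_eq, hW, hW']

end ConstantIntersection

section RankSupport

variable {F E : Type*} [Field F] [Field E] [Algebra F E] [FiniteDimensional F E] {n : ℕ}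

theorem mem_span_fIncl_iff {U : Submodule F (Fin n → F)} {d : Fin n → E} :
    d ∈ span E (fIncl F E n '' U) ↔ ∀ l : Module.Dual F E, l.compLeft (Fin n) d ∈ U := by
  constructor
  · intro hd
    induction hd using span_induction with
    | mem _ hx =>
      obtain ⟨u, hu, rfl⟩ := hx
      intro l
      convert U.smul_mem (l 1) hu using 1
      ext j
      simp [fIncl, Algebra.algebraMap_eq_smul_one, mul_comm]
    | zero => simp
    | add x y _ _ hx hy => exact fun l => map_add (l.compLeft (Fin n)) x y ▸ U.add_mem (hx l) (hy l)
    | smul a _ _ hx => exact fun l => hx (l ∘ₗ LinearMap.mulLeft F a)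
  · intro hd
    let b := Module.finBasis F E
    have expansion : d = ∑ i, b i • fIncl F E n ((b.coord i).compLeft (Fin n) d) := by
      ext j
      rw [← b.sum_repr (d j), Finset.sum_apply]
      refine Finset.sum_congr rfl fun i _ => ?_
      simp [fIncl, Algebra.smul_def, mul_comm]
    rw [expansion]
    exact sum_mem fun i _ => smul_mem _ _ (subset_span ⟨_, hd _, rfl⟩)

theorem rankSupport_eq_span (A : Set (Fin n → E)) :
    rankSupport F E n A =
      span F (Set.image2 (fun d (l : Module.Dual F E) => l.compLeft (Fin n) d) A Set.univ) := by
  rw [rankSupport, span]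
  congr 1
  ext U
  simp only [Set.mem_ofPred_eq, Set.image2_subset_iff, Set.mem_univ, true_imp_iff]
  exact forall₂_congr fun _ _ => mem_span_fIncl_iff

theorem mem_dualAnnihilator_rankSupport_iff {A : Set (Fin n → E)} {y : Fin n → F} :
    dotProductEquiv F (Fin n) y ∈ (rankSupport F E n A).dualAnnihilator ↔
      ∀ d ∈ A, ∑ j, y j • d j = 0 := by
  rw [mem_dualAnnihilator, rankSupport_eq_span]
  change span F _ ≤ LinearMap.ker _ ↔ _
  rw [span_le, Set.image2_subset_iff]
  refine forall₂_congr fun d _ => ?_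
  rw [← Module.forall_dual_apply_eq_zero_iff F (∑ j, y j • d j)]
  simp [dotProduct]

theorem wt_add_finrank_eq {A : Set (Fin n → E)} {K : Submodule F (Fin n → F)}
    (hK : ∀ y, y ∈ K ↔ ∀ d ∈ A, ∑ j, y j • d j = 0) : wt F E n A + Module.finrank F K = n := by
  have hK_map : K.map (dotProductEquiv F (Fin n)).toLinearMap =
      (rankSupport F E n A).dualAnnihilator := by
    ext φ
    obtain ⟨y, rfl⟩ := (dotProductEquiv F (Fin n)).surjective φ
    rw [mem_dualAnnihilator_rankSupport_iff, ← hK]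
    simp
  rw [wt, ← LinearEquiv.finrank_map_eq (dotProductEquiv F (Fin n)) K, hK_map,
    Subspace.finrank_add_finrank_dualAnnihilator_eq, Module.finrank_fin_fun]

end RankSupport

section Subcode

variable {F E V : Type*} [Field F] [Field E] [Algebra F E] [AddCommGroup V] [Module F V]
  [Module E V] [IsScalarTower F E V] {n : ℕ}

/-- The coordinate-free form of multiplication of a row vector by a generator matrix: `col j` is
the `j`-th column, in the message space `V`, and row vectors are functionals on `V`. -/
def encode (col : Fin n → V) : Module.Dual E V →ₗ[E] (Fin n → E) :=
  LinearMap.pi fun j => Module.Dual.eval E V (col j)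

/-- The subcode that corresponds to `W`: the encodings of the functionals vanishing on `W`. -/
def subcode (col : Fin n → V) (W : Submodule E V) : Submodule E (Fin n → E) :=
  W.dualAnnihilator.map (encode col)

theorem subcode_le_range (col : Fin n → V) (W : Submodule E V) :
    subcode col W ≤ LinearMap.range (encode (E := E) col) :=
  LinearMap.map_le_range

theorem subcode_bot (col : Fin n → V) :
    subcode col (⊥ : Submodule E V) = LinearMap.range (encode (E := E) col) := by
  rw [subcode, dualAnnihilator_bot, Submodule.map_top]

theorem range_encode_columns {k : ℕ} (G : Fin k → Fin n → E) :
    LinearMap.range (encode (E := E) fun j i => G i j) = span E (Set.range G) := by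
  rw [← Fintype.range_linearCombination E G]
  have hcomp : encode (E := E) (fun j i => G i j) ∘ₗ (dotProductEquiv E (Fin k)).toLinearMap =
      Fintype.linearCombination E G := by
    ext i j
    simp [encode]
  rw [← hcomp, LinearMap.range_comp_of_range_eq_top _ (LinearEquiv.range _)]

theorem mem_comap_linearCombination_iff_forall_mem_subcode {col : Fin n → V} {W : Submodule E V}
    {y : Fin n → F} :
    y ∈ (W.restrictScalars F).comap (Fintype.linearCombination F col) ↔
      ∀ d ∈ subcode col W, ∑ j, y j • d j = 0 := by
  rw [mem_comap, restrictScalars_mem, ← Subspace.forall_mem_dualAnnihilator_apply_eq_zero_iff]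
  simp [subcode, encode, Fintype.linearCombination_apply, map_sum,
    LinearMap.map_smul_of_tower]

theorem span_span_range_eq_top {col : Fin n → V}
    (hcol : Function.Injective (encode (E := E) col)) :
    span E (span F (Set.range col) : Set V) = ⊤ := by
  rw [span_span_of_tower]
  by_contra hne
  obtain ⟨f, hf0, hf⟩ := exists_le_ker_of_lt_top _ (lt_top_iff_ne_top.2 hne)
  refine hf0 (hcol ?_)
  ext j
  simpa [encode] using hf (subset_span ⟨j, rfl⟩)

variable [FiniteDimensional F E]

theorem wt_subcode_add_finrank_inf (col : Fin n → V) (W : Submodule E V) :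
    wt F E n (subcode col W) +
        Module.finrank F (span F (Set.range col) ⊓ W.restrictScalars F : Submodule F V) =
      Module.finrank F (span F (Set.range col)) := by
  have hwt : wt F E n (subcode col W) +
      Module.finrank F ((W.restrictScalars F).comap (Fintype.linearCombination F col)) = n :=
    wt_add_finrank_eq fun _ => mem_comap_linearCombination_iff_forall_mem_subcode
  have hcomap := finrank_comap_add_finrank_range (Fintype.linearCombination F col)
    (W.restrictScalars F)
  rw [Fintype.range_linearCombination, Module.finrank_fin_fun] at hcomap
  omega

theorem wt_range_encode (col : Fin n → V) :
    wt F E n (LinearMap.range (encode (E := E) col)) =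
      Module.finrank F (span F (Set.range col)) := by
  have h := wt_subcode_add_finrank_inf (F := F) col (⊥ : Submodule E V)
  rwa [subcode_bot, restrictScalars_bot, inf_bot_eq, finrank_bot, add_zero] at h

variable [FiniteDimensional E V]

theorem finrank_subcode_add_finrank {col : Fin n → V}
    (hcol : Function.Injective (encode (E := E) col)) (W : Submodule E V) :
    Module.finrank E (subcode col W) + Module.finrank E W = Module.finrank E V := by
  rw [subcode, ← (equivMapOfInjective _ hcol _).finrank_eq, add_comm,
    Subspace.finrank_add_finrank_dualAnnihilator_eq]

theorem exists_subcode_eq {col : Fin n → V} {D : Submodule E (Fin n → E)}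
    (hD : D ≤ LinearMap.range (encode (E := E) col)) : ∃ W : Submodule E V, subcode col W = D :=
  ⟨(D.comap (encode col)).dualCoannihilator, by
    rw [subcode, Subspace.dualCoannihilator_dualAnnihilator_eq, map_comap_eq, inf_eq_right.2 hD]⟩

theorem forall_wt_eq_iff_span_range_eq_top {col : Fin n → V}
    (hcol : Function.Injective (encode (E := E) col)) {r : ℕ} (hr : 1 ≤ r)
    (hrV : r < Module.finrank E V) :
    (∀ D L : Submodule E (Fin n → E), D ≤ LinearMap.range (encode col) →
        L ≤ LinearMap.range (encode col) → Module.finrank E D = r → Module.finrank E L = r →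
          wt F E n D = wt F E n L) ↔
      span F (Set.range col) = ⊤ := by
  rw [← forall_finrank_inf_eq_iff_eq_top (span_span_range_eq_top hcol)
    (s := Module.finrank E V - r) (by omega) (by omega)]
  constructor
  · intro h W W' hW hW'
    have hdim := finrank_subcode_add_finrank hcol W
    have hdim' := finrank_subcode_add_finrank hcol W'
    have hwt := wt_subcode_add_finrank_inf (F := F) col W
    have hwt' := wt_subcode_add_finrank_inf (F := F) col W'
    have heq := h _ _ (subcode_le_range col W) (subcode_le_range col W') (by omega) (by omega)
    omega
  · intro h D L hD hL hDr hLr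
    obtain ⟨W, rfl⟩ := exists_subcode_eq hD
    obtain ⟨W', rfl⟩ := exists_subcode_eq hL
    have hdim := finrank_subcode_add_finrank hcol W
    have hdim' := finrank_subcode_add_finrank hcol W'
    have hwt := wt_subcode_add_finrank_inf (F := F) col W
    have hwt' := wt_subcode_add_finrank_inf (F := F) col W'
    have heq := h W W' (by omega) (by omega)
    omega

end Subcode

/-- Theorem 4.6: for an `[n,k]` code `C` with generator matrix `G`, `U` the `F`-span of the
columns of `G`, and `r ∈ {1, …, k-1}`, the following are equivalent:
(1) all `r`-dimensional subcodes of `C` have the same rank support weight;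
(2) `U = E^k`; (3) `wt(C) = dim_F C = mk`. -/
theorem statement15 (F E : Type*) [Field F] [Field E] [Algebra F E]
    [FiniteDimensional F E] (m : ℕ) (hm : Module.finrank F E = m)
    (n k : ℕ) (hk : 1 ≤ k) (hkn : k ≤ n)
    (C : Submodule E (Fin n → E)) (hC : Module.finrank E C = k)
    (G : Fin k → Fin n → E) (hG : Submodule.span E (Set.range G) = C)
    (U : Submodule F (Fin k → E))
    (hU : U = Submodule.span F (Set.range fun j => fun i => G i j))
    (r : ℕ) (hr1 : 1 ≤ r) (hrk : r + 1 ≤ k) :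
    ((∀ D L : Submodule E (Fin n → E), D ≤ C → L ≤ C →
        Module.finrank E D = r → Module.finrank E L = r →
          wt F E n (D : Set (Fin n → E)) = wt F E n (L : Set (Fin n → E))) ↔ U = ⊤) ∧
      ((∀ D L : Submodule E (Fin n → E), D ≤ C → L ≤ C →
        Module.finrank E D = r → Module.finrank E L = r →
          wt F E n (D : Set (Fin n → E)) = wt F E n (L : Set (Fin n → E))) ↔
        (wt F E n (C : Set (Fin n → E)) = Module.finrank F (C.restrictScalars F) ∧
          Module.finrank F (C.restrictScalars F) = m * k)) := by
  subst hU
  have hrange : LinearMap.range (encode (E := E) fun j i => G i j) = C :=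
    (range_encode_columns G).trans hG
  have hinj : Function.Injective (encode (E := E) fun j i => G i j) := by
    rw [← LinearMap.ker_eq_bot, ← finrank_eq_zero]
    have h := (encode (E := E) fun j i => G i j).finrank_range_add_finrank_ker
    rw [hrange, hC, Subspace.dual_finrank_eq, Module.finrank_fin_fun] at h
    omega
  have hCF : Module.finrank F (C.restrictScalars F) = m * k := by
    rw [← hm, ← hC]
    exact (Module.finrank_mul_finrank F E C).symm
  have hVF : Module.finrank F (Fin k → E) = m * k := by
    rw [← Module.finrank_mul_finrank F E (Fin k → E), hm, Module.finrank_fin_fun]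
  have : FiniteDimensional F (Fin k → E) := FiniteDimensional.trans F E _
  have hconst := forall_wt_eq_iff_span_range_eq_top (F := F) hinj hr1 (by simpa using hrk)
  rw [hrange] at hconst
  refine ⟨hconst, hconst.trans ?_⟩
  rw [hCF, ← hrange, wt_range_encode, ← hVF]
  exact ⟨fun h => ⟨by rw [h, finrank_top], rfl⟩, fun h => eq_top_of_finrank_eq h.1⟩
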